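/- There exist a constant C > 0 and a real x₀ ≥ 3 such that for all real x ≥ x₀, π₂(x) ≤ C · x (log log x)² / (log x)². -/

import Mathlib

/-- `twinPrimeCounting x` is the number of primes `p ≤ x` such that `p + 2` is
also prime. -/
noncomputable def twinPrimeCounting (x : ℝ) : ℕ :=
  ((Finset.Icc 1 ⌊x⌋₊).filter (fun p => p.Prime ∧ (p + 2).Prime)).card

/-!
Brun's pure sieve. Up to `z` exceptions, every twin prime `n ≤ x` avoids the residue classes `0`
and `-2` modulo each odd prime `p ≤ z`. Stopping inclusion–exclusion at an even level `m = 2k` gives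
an upper bound (Bonferroni) that involves only products of at most `m` primes. By the Chinese
remainder theorem, the `n ≤ x` lying in a sifted class modulo each `p ∈ T` number
`x ∏_{p ∈ T} 2 / p` up to an error of `2 ^ #T`, and Rankin's trick bounds both the total error and
the truncated part of the main term `x ∏_p (1 - 2 / p)`. The Mertens-type estimates
`∑_{p ≤ z} 1 / p ≤ 4 log log z + 7` and `∏_{p ≤ z} (1 - 1 / p) ≤ 1 / log z` make the main term
`O(x / (log z)²)`. The truncated part forces `k` to be of order `log log x`, and keeping the error,
about `z ^ (2k)`, below `√x` then forces `log z` down to the order of `log x / log log x`: this is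
where the factor `(log log x)²` is lost.
-/

open Finset Real Filter
open Nat (primesLE mem_primesLE)

section Bonferroni

variable {α ι : Type*}

theorem sum_powerset_card_le_neg_one_pow {T : Finset ι} (hT : T.Nonempty) (m : ℕ) :
    ∑ S ∈ T.powerset with #S ≤ m, (-1 : ℤ) ^ #S = (-1) ^ m * (#T - 1).choose m := by
  have hmaps : ∀ S ∈ {S ∈ T.powerset | #S ≤ m}, #S ∈ range (m + 1) := by grind
  have hfiber : ∀ j ∈ range (m + 1),
      {S ∈ {S ∈ T.powerset | #S ≤ m} | #S = j} = T.powersetCard j := by grind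
  calc ∑ S ∈ T.powerset with #S ≤ m, (-1 : ℤ) ^ #S
    _ = ∑ j ∈ range (m + 1), ∑ S ∈ T.powersetCard j, (-1 : ℤ) ^ #S := by
      rw [← sum_fiberwise_of_maps_to hmaps]
      exact sum_congr rfl fun j hj ↦ by rw [hfiber j hj]
    _ = ∑ j ∈ range (m + 1), (-1 : ℤ) ^ j * (#T - 1 + 1).choose j := by
      refine sum_congr rfl fun j _ ↦ ?_
      rw [sum_congr rfl fun S hS ↦ by rw [(mem_powersetCard.mp hS).2], sum_const,
        card_powersetCard, nsmul_eq_mul, mul_comm, Nat.sub_add_cancel hT.card_pos]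
    _ = (-1) ^ m * (#T - 1).choose m := Int.alternating_sum_range_choose_eq_choose

theorem ite_eq_empty_le_sum_powerset_card_le [DecidableEq ι] (T : Finset ι) {m : ℕ}
    (hm : Even m) :
    (if T = ∅ then 1 else 0) ≤ ∑ S ∈ T.powerset with #S ≤ m, (-1 : ℤ) ^ #S := by
  rcases T.eq_empty_or_nonempty with rfl | hT
  · simp [filter_singleton]
  · rw [if_neg hT.ne_empty, sum_powerset_card_le_neg_one_pow hT, hm.neg_one_pow, one_mul]
    positivity

theorem card_filter_forall_not_le_sum_powerset (s : Finset α) (P : Finset ι) (r : α → ι → Prop)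
    [∀ a, DecidablePred (r a)] {m : ℕ} (hm : Even m) :
    (#{a ∈ s | ∀ i ∈ P, ¬ r a i} : ℤ) ≤
      ∑ T ∈ P.powerset with #T ≤ m, (-1) ^ #T * (#{a ∈ s | ∀ i ∈ T, r a i} : ℤ) := by
  classical
  have hinner (a : α) : ∑ T ∈ ({i ∈ P | r a i} : Finset ι).powerset with #T ≤ m, (-1 : ℤ) ^ #T =
      ∑ T ∈ P.powerset with #T ≤ m, if ∀ i ∈ T, r a i then (-1) ^ #T else 0 := by
    rw [← sum_filter]
    exact sum_congr (by grind) fun _ _ ↦ rfl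
  calc (#{a ∈ s | ∀ i ∈ P, ¬ r a i} : ℤ)
    _ = ∑ a ∈ s, if ({i ∈ P | r a i} : Finset ι) = ∅ then 1 else 0 := by
      simp only [card_filter, Nat.cast_sum, Nat.cast_ite, Nat.cast_one, Nat.cast_zero,
        filter_eq_empty_iff]
    _ ≤ ∑ a ∈ s, ∑ T ∈ ({i ∈ P | r a i} : Finset ι).powerset with #T ≤ m, (-1 : ℤ) ^ #T :=
      sum_le_sum fun a _ ↦ ite_eq_empty_le_sum_powerset_card_le _ hm
    _ = ∑ T ∈ P.powerset with #T ≤ m, (-1) ^ #T * (#{a ∈ s | ∀ i ∈ T, r a i} : ℤ) := by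
      simp only [hinner]
      rw [sum_comm]
      exact sum_congr rfl fun T _ ↦ by rw [← sum_filter, sum_const, nsmul_eq_mul, mul_comm]

end Bonferroni

section BrunSieve

variable {α ι : Type*} {P : Finset ι} {g : ι → ℝ}

theorem prod_one_add_le_exp_sum (hg : ∀ i ∈ P, 0 ≤ g i) :
    ∏ i ∈ P, (1 + g i) ≤ exp (∑ i ∈ P, g i) := by
  rw [exp_sum]
  refine prod_le_prod (fun i hi ↦ ?_) fun i _ ↦ ?_
  · linarith [hg i hi]
  · linarith [add_one_le_exp (g i)]

theorem sum_powerset_pow_card_mul_prod_le_exp (hg : ∀ i ∈ P, 0 ≤ g i) {c : ℝ} (hc : 0 ≤ c) :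
    ∑ T ∈ P.powerset, c ^ #T * ∏ i ∈ T, g i ≤ exp (c * ∑ i ∈ P, g i) := by
  simp only [← prod_const, ← prod_mul_distrib]
  rw [← prod_one_add, mul_sum]
  exact prod_one_add_le_exp_sum fun i hi ↦ mul_nonneg hc (hg i hi)

theorem sum_powerset_card_le_prod_le_exp (hg : ∀ i ∈ P, 0 ≤ g i) {y : ℝ} (hy : 1 ≤ y) (m : ℕ) :
    ∑ T ∈ P.powerset with #T ≤ m, ∏ i ∈ T, g i ≤ y ^ m * exp ((∑ i ∈ P, g i) / y) := by
  have hprod : ∀ T ∈ P.powerset, 0 ≤ ∏ i ∈ T, g i := fun T hT ↦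
    prod_nonneg fun i hi ↦ hg i (mem_powerset.mp hT hi)
  have : 0 < y := by linarith
  calc ∑ T ∈ P.powerset with #T ≤ m, ∏ i ∈ T, g i
    -- Rankin's trick: a set `T` of size at most `m` may be weighted by `y ^ (m - #T) ≥ 1`.
    _ ≤ ∑ T ∈ P.powerset with #T ≤ m, y ^ m * (y⁻¹ ^ #T * ∏ i ∈ T, g i) := by
      refine sum_le_sum fun T hT ↦ ?_
      obtain ⟨hTP, hTm⟩ := mem_filter.mp hT
      rw [← mul_assoc, inv_pow, ← div_eq_mul_inv]
      exact le_mul_of_one_le_left (hprod T hTP)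
        ((one_le_div₀ (by positivity)).mpr (pow_le_pow_right₀ hy hTm))
    _ ≤ ∑ T ∈ P.powerset, y ^ m * (y⁻¹ ^ #T * ∏ i ∈ T, g i) :=
      sum_le_sum_of_subset_of_nonneg (filter_subset _ _) fun T hT _ ↦ by
        have := hprod T hT
        positivity
    _ ≤ y ^ m * exp ((∑ i ∈ P, g i) / y) := by
      rw [← mul_sum, div_eq_inv_mul]
      gcongr
      exact sum_powerset_pow_card_mul_prod_le_exp hg (by positivity)

theorem sum_powerset_lt_card_prod_le_exp (hg : ∀ i ∈ P, 0 ≤ g i) {c : ℝ} (hc : 1 ≤ c) (m : ℕ) :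
    ∑ T ∈ P.powerset with m < #T, ∏ i ∈ T, g i ≤ exp (c * ∑ i ∈ P, g i) / c ^ m := by
  have hprod : ∀ T ∈ P.powerset, 0 ≤ ∏ i ∈ T, g i := fun T hT ↦
    prod_nonneg fun i hi ↦ hg i (mem_powerset.mp hT hi)
  have hc0 : 0 < c := by linarith
  rw [le_div_iff₀ (by positivity), sum_mul]
  calc ∑ T ∈ P.powerset with m < #T, (∏ i ∈ T, g i) * c ^ m
    _ ≤ ∑ T ∈ P.powerset with m < #T, c ^ #T * ∏ i ∈ T, g i := by
      refine sum_le_sum fun T hT ↦ ?_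
      obtain ⟨hTP, hTm⟩ := mem_filter.mp hT
      rw [mul_comm]
      exact mul_le_mul_of_nonneg_right (pow_le_pow_right₀ hc hTm.le) (hprod T hTP)
    _ ≤ ∑ T ∈ P.powerset, c ^ #T * ∏ i ∈ T, g i :=
      sum_le_sum_of_subset_of_nonneg (filter_subset _ _) fun T hT _ ↦ by
        have := hprod T hT
        positivity
    _ ≤ exp (c * ∑ i ∈ P, g i) := sum_powerset_pow_card_mul_prod_le_exp hg hc0.le

theorem sum_powerset_card_le_neg_one_pow_mul_prod_le (hg : ∀ i ∈ P, 0 ≤ g i) (m : ℕ) :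
    ∑ T ∈ P.powerset with #T ≤ m, (-1) ^ #T * ∏ i ∈ T, g i ≤
      ∏ i ∈ P, (1 - g i) + ∑ T ∈ P.powerset with m < #T, ∏ i ∈ T, g i := by
  have hexpand : ∏ i ∈ P, (1 - g i) = ∑ T ∈ P.powerset, (-1) ^ #T * ∏ i ∈ T, g i := by
    simp only [sub_eq_add_neg, prod_one_add, prod_neg]
  rw [hexpand, ← sum_filter_add_sum_filter_not P.powerset (#· ≤ m), add_assoc,
    le_add_iff_nonneg_right]
  simp only [not_le, ← sum_add_distrib]
  refine sum_nonneg fun T hT ↦ ?_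
  have hprod : 0 ≤ ∏ i ∈ T, g i :=
    prod_nonneg fun i hi ↦ hg i (mem_powerset.mp (mem_filter.mp hT).1 hi)
  rcases neg_one_pow_eq_or ℝ #T with h | h <;> rw [h] <;> linarith

theorem card_filter_forall_not_le_of_abs_sub_le {s : Finset α} {r : α → ι → Prop}
    [∀ a, DecidablePred (r a)] {X : ℝ} (hX : 0 ≤ X) {w : ι → ℝ} (hg : ∀ i ∈ P, 0 ≤ g i)
    (hw : ∀ i ∈ P, 0 ≤ w i)
    (hcard : ∀ T ⊆ P, |#{a ∈ s | ∀ i ∈ T, r a i} - X * ∏ i ∈ T, g i| ≤ ∏ i ∈ T, w i)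
    {c y : ℝ} (hc : 1 ≤ c) (hy : 1 ≤ y) {m : ℕ} (hm : Even m) :
    (#{a ∈ s | ∀ i ∈ P, ¬ r a i} : ℝ) ≤
      X * (∏ i ∈ P, (1 - g i) + exp (c * ∑ i ∈ P, g i) / c ^ m) +
        y ^ m * exp ((∑ i ∈ P, w i) / y) := by
  have hterm : ∀ T ∈ {T ∈ P.powerset | #T ≤ m},
      (-1) ^ #T * (#{a ∈ s | ∀ i ∈ T, r a i} : ℝ) ≤
        X * ((-1) ^ #T * ∏ i ∈ T, g i) + ∏ i ∈ T, w i := by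
    intro T hT
    have h := abs_le.mp (hcard T (mem_powerset.mp (mem_filter.mp hT).1))
    rcases neg_one_pow_eq_or ℝ #T with h' | h' <;> rw [h'] <;> linarith
  calc (#{a ∈ s | ∀ i ∈ P, ¬ r a i} : ℝ)
    _ ≤ ∑ T ∈ P.powerset with #T ≤ m, (-1) ^ #T * (#{a ∈ s | ∀ i ∈ T, r a i} : ℝ) :=
      mod_cast card_filter_forall_not_le_sum_powerset s P r hm
    _ ≤ X * ∑ T ∈ P.powerset with #T ≤ m, (-1) ^ #T * ∏ i ∈ T, g i +
        ∑ T ∈ P.powerset with #T ≤ m, ∏ i ∈ T, w i := by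
      rw [mul_sum, ← sum_add_distrib]
      exact sum_le_sum hterm
    _ ≤ _ := by
      gcongr
      · exact (sum_powerset_card_le_neg_one_pow_mul_prod_le hg m).trans
          (by gcongr; exact sum_powerset_lt_card_prod_le_exp hg hc m)
      · exact sum_powerset_card_le_prod_le_exp hw hy m

end BrunSieve

section ResidueClasses

variable {a b : ℕ}

theorem abs_card_Ioc_filter_natCast_eq_sub_le (hab : a ≤ b) {d : ℕ} [NeZero d] (v : ZMod d) :
    |(#{n ∈ Ioc a b | ((n : ℕ) : ZMod d) = v} : ℝ) - (b - a) / d| ≤ 1 := by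
  have hd : (0 : ℚ) < d := mod_cast NeZero.pos d
  have hfloor : ⌊(a - v.val : ℚ) / d⌋ ≤ ⌊(b - v.val : ℚ) / d⌋ := by gcongr
  have hcard : (#{n ∈ Ioc a b | ((n : ℕ) : ZMod d) = v} : ℤ) =
      ⌊(b - v.val : ℚ) / d⌋ - ⌊(a - v.val : ℚ) / d⌋ := by
    rw [← max_eq_left (sub_nonneg.mpr hfloor), ← Nat.Ioc_filter_modEq_card a b (NeZero.pos d)]
    simp only [← ZMod.natCast_eq_natCast_iff, ZMod.natCast_val, ZMod.cast_id', id]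
  have hdiv : (b - a : ℚ) / d = (b - v.val) / d - (a - v.val) / d := by ring
  have hrat : |(#{n ∈ Ioc a b | ((n : ℕ) : ZMod d) = v} : ℚ) - (b - a) / d| ≤ 1 := by
    rw [← Int.cast_natCast, hcard, hdiv, Int.cast_sub, abs_le]
    constructor <;>
    linarith [Int.floor_le ((b - v.val : ℚ) / d), Int.lt_floor_add_one ((b - v.val : ℚ) / d),
      Int.floor_le ((a - v.val : ℚ) / d), Int.lt_floor_add_one ((a - v.val : ℚ) / d)]
  have hreal := (Rat.cast_le (K := ℝ)).mpr hrat
  push_cast at hreal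
  exact hreal

theorem abs_card_Ioc_filter_natCast_mem_sub_le (hab : a ≤ b) {d : ℕ} [NeZero d]
    (A : Finset (ZMod d)) :
    |(#{n ∈ Ioc a b | ((n : ℕ) : ZMod d) ∈ A} : ℝ) - (b - a) * (#A / d)| ≤ #A := by
  have hcard : #{n ∈ Ioc a b | ((n : ℕ) : ZMod d) ∈ A} =
      ∑ v ∈ A, #{n ∈ Ioc a b | ((n : ℕ) : ZMod d) = v} := by
    have hmaps : ∀ n ∈ {n ∈ Ioc a b | ((n : ℕ) : ZMod d) ∈ A}, (n : ZMod d) ∈ A := by simp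
    rw [card_eq_sum_card_fiberwise hmaps]
    exact sum_congr rfl fun v hv ↦ congrArg card (by grind)
  have hmain : (b - a : ℝ) * (#A / d) = ∑ _ ∈ A, (b - a : ℝ) / d := by
    rw [sum_const, nsmul_eq_mul]
    ring
  rw [hcard, hmain, Nat.cast_sum, ← sum_sub_distrib]
  calc |∑ v ∈ A, ((#{n ∈ Ioc a b | ((n : ℕ) : ZMod d) = v} : ℝ) - (b - a) / d)|
    _ ≤ ∑ v ∈ A, |(#{n ∈ Ioc a b | ((n : ℕ) : ZMod d) = v} : ℝ) - (b - a) / d| :=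
      abs_sum_le_sum_abs _ _
    _ ≤ ∑ v ∈ A, 1 := sum_le_sum fun v _ ↦ abs_card_Ioc_filter_natCast_eq_sub_le hab v
    _ = #A := by simp

theorem abs_card_Ioc_filter_forall_natCast_mem_sub_le (hab : a ≤ b) {S : Finset ℕ}
    (hS : ∀ q ∈ S, q ≠ 0) (hcop : (S : Set ℕ).Pairwise Nat.Coprime)
    (Ω : ∀ q : ℕ, Finset (ZMod q)) :
    |(#{n ∈ Ioc a b | ∀ q ∈ S, ((n : ℕ) : ZMod q) ∈ Ω q} : ℝ) -
      (b - a) * ∏ q ∈ S, (#(Ω q) / q : ℝ)| ≤ ∏ q ∈ S, (#(Ω q) : ℝ) := by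
  have : NeZero (∏ q : S, (q : ℕ)) := ⟨prod_ne_zero_iff.mpr fun q _ ↦ hS q q.2⟩
  have hcop' : Pairwise (Function.onFun Nat.Coprime fun q : S ↦ (q : ℕ)) := fun p q hpq ↦
    hcop p.2 q.2 (Subtype.coe_injective.ne hpq)
  let e := ZMod.prodEquivPi (fun q : S ↦ (q : ℕ)) hcop'
  let A : Finset (ZMod (∏ q : S, (q : ℕ))) := {v | e v ∈ Fintype.piFinset fun q : S ↦ Ω q}
  have hA (n : ℕ) : (n : ZMod (∏ q : S, (q : ℕ))) ∈ A ↔ ∀ q ∈ S, (n : ZMod q) ∈ Ω q := by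
    simp only [A, mem_filter_univ, Fintype.mem_piFinset, map_natCast, Pi.natCast_apply,
      Subtype.forall]
  have hAcard : #A = ∏ q ∈ S, #(Ω q) :=
    calc #A
      _ = #(Fintype.piFinset fun q : S ↦ Ω q) := card_equiv e.toEquiv fun v ↦ mem_filter_univ v
      _ = ∏ q ∈ S, #(Ω q) := by
        rw [Fintype.card_piFinset, prod_coe_sort S fun q ↦ #(Ω q)]
  have h := abs_card_Ioc_filter_natCast_mem_sub_le hab A
  simp only [hA, hAcard, prod_coe_sort S fun q ↦ q] at h
  simpa only [Nat.cast_prod, prod_div_distrib] using h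

theorem card_Ioc_filter_forall_natCast_notMem_le (hab : a ≤ b) {P : Finset ℕ}
    (hP : ∀ q ∈ P, q ≠ 0) (hcop : (P : Set ℕ).Pairwise Nat.Coprime)
    (Ω : ∀ q : ℕ, Finset (ZMod q)) {c y : ℝ} (hc : 1 ≤ c) (hy : 1 ≤ y) {m : ℕ} (hm : Even m) :
    (#{n ∈ Ioc a b | ∀ q ∈ P, ((n : ℕ) : ZMod q) ∉ Ω q} : ℝ) ≤
      (b - a) * (∏ q ∈ P, (1 - #(Ω q) / q : ℝ) + exp (c * ∑ q ∈ P, (#(Ω q) / q : ℝ)) / c ^ m) +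
        y ^ m * exp ((∑ q ∈ P, (#(Ω q) : ℝ)) / y) :=
  card_filter_forall_not_le_of_abs_sub_le (sub_nonneg.mpr (mod_cast hab))
    (fun _ _ ↦ by positivity) (fun _ _ ↦ by positivity)
    (fun _ hT ↦ abs_card_Ioc_filter_forall_natCast_mem_sub_le hab (fun q hq ↦ hP q (hT hq))
      (hcop.mono (mod_cast hT)) Ω)
    hc hy hm

end ResidueClasses
section Mertens

theorem sum_primesLE_two_mul_sdiff_inv_le {n : ℕ} (hn : 2 ≤ n) :
    ∑ p ∈ primesLE (2 * n) \ primesLE n, (p : ℝ)⁻¹ ≤ 4 * log 2 / log n := by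
  have hn' : (1 : ℝ) < n := mod_cast hn
  have hlog : 0 < log n := log_pos hn'
  have hterm : ∀ p ∈ primesLE (2 * n) \ primesLE n, (p : ℝ)⁻¹ ≤ log p / (n * log n) := by
    intro p hp
    have hnp : n < p := by grind [mem_primesLE]
    have hnp' : (n : ℝ) < p := mod_cast hnp
    rw [inv_eq_one_div, div_le_div_iff₀ (by linarith) (by positivity), one_mul, mul_comm]
    gcongr
  have htheta : ∑ p ∈ primesLE (2 * n) \ primesLE n, log p ≤ log 4 * (2 * n) :=
    calc ∑ p ∈ primesLE (2 * n) \ primesLE n, log p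
      _ ≤ ∑ p ∈ primesLE (2 * n), log p :=
        sum_le_sum_of_subset_of_nonneg sdiff_subset fun p _ _ ↦ log_natCast_nonneg p
      _ = Chebyshev.theta (2 * n : ℕ) := (Chebyshev.theta_eq_sum_primesLE_log _).symm
      _ ≤ log 4 * (2 * n) := mod_cast Chebyshev.theta_le_log4_mul_x (Nat.cast_nonneg (2 * n))
  have hlog4 : log 4 = 2 * log 2 := by
    rw [show (4 : ℝ) = 2 ^ 2 by norm_num, log_pow, Nat.cast_ofNat]
  calc ∑ p ∈ primesLE (2 * n) \ primesLE n, (p : ℝ)⁻¹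
    _ ≤ (∑ p ∈ primesLE (2 * n) \ primesLE n, log p) / (n * log n) := by
      rw [sum_div]
      exact sum_le_sum hterm
    _ ≤ log 4 * (2 * n) / (n * log n) := by gcongr
    _ = 4 * log 2 / log n := by
      rw [hlog4]
      field_simp
      ring

theorem sum_primesLE_two_pow_inv_le (m : ℕ) :
    ∑ p ∈ primesLE (2 ^ (m + 1)), (p : ℝ)⁻¹ ≤ 1 / 2 + 4 * harmonic m := by
  induction m with
  | zero =>
    have htwo : primesLE (2 ^ (0 + 1)) = {2} := by decide
    rw [htwo]
    simp
  | succ m ih =>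
    have hlog2 : 0 < log 2 := log_pos one_lt_two
    have hdyadic := sum_primesLE_two_mul_sdiff_inv_le (n := 2 ^ (m + 1))
      (Nat.le_self_pow m.succ_ne_zero 2)
    rw [← pow_succ', Nat.cast_pow, log_pow, Nat.cast_ofNat, mul_div_mul_right _ _ hlog2.ne',
      div_eq_mul_inv] at hdyadic
    rw [← sum_sdiff (Nat.primesLE_mono (Nat.pow_le_pow_right two_pos (m + 1).le_succ)),
      harmonic_succ, Rat.cast_add, Rat.cast_inv, Rat.cast_natCast]
    linarith

theorem sum_primesLE_inv_le {n : ℕ} (hn : 2 ≤ n) :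
    ∑ p ∈ primesLE n, (p : ℝ)⁻¹ ≤ 4 * log (log n) + 7 := by
  set m := Nat.log 2 n
  have hm : 1 ≤ m := Nat.log_pos one_lt_two hn
  have hlog2 : 0 < log 2 := log_pos one_lt_two
  have hlogn : 0 < log n := log_pos (mod_cast hn)
  have hloglog : log m ≤ log (log n) + 1 / 2 := by
    have hmn : (m : ℝ) ≤ log n * (log 2)⁻¹ := natLog_le_logb n 2
    have h := log_le_log (by positivity) hmn
    rw [log_mul hlogn.ne' (by positivity)] at h
    have hinv : (log 2)⁻¹ ≤ 3 / 2 := by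
      rw [inv_le_comm₀ hlog2 (by norm_num)]
      linarith [log_two_gt_d9]
    linarith [log_le_sub_one_of_pos (inv_pos.mpr hlog2)]
  calc ∑ p ∈ primesLE n, (p : ℝ)⁻¹
    _ ≤ ∑ p ∈ primesLE (2 ^ (m + 1)), (p : ℝ)⁻¹ :=
      sum_le_sum_of_subset_of_nonneg
        (Nat.primesLE_mono (Nat.lt_pow_succ_log_self one_lt_two n).le) fun _ _ _ ↦ by positivity
    _ ≤ 1 / 2 + 4 * harmonic m := sum_primesLE_two_pow_inv_le m
    _ ≤ 4 * log (log n) + 7 := by linarith [harmonic_le_one_add_log m]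

theorem harmonic_le_prod_primesLE (n : ℕ) :
    (harmonic n : ℝ) ≤ ∏ p ∈ primesLE n, (1 - (p : ℝ)⁻¹)⁻¹ := by
  let f : ℕ →* ℝ := (invMonoidHom (α := ℝ)).comp (Nat.castRingHom ℝ : ℕ →* ℝ)
  have hf {p : ℕ} (hp : p.Prime) : ‖f p‖ < 1 := by
    change ‖(p : ℝ)⁻¹‖ < 1
    rw [norm_inv, RCLike.norm_natCast]
    exact inv_lt_one_of_one_lt₀ (mod_cast hp.one_lt)
  have hsum : HasSum ((n + 1).smoothNumbers.indicator fun i : ℕ ↦ (i : ℝ)⁻¹)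
      (∏ p ∈ primesLE n, (1 - (p : ℝ)⁻¹)⁻¹) :=
    hasSum_subtype_iff_indicator.mp
      (EulerProduct.summable_and_hasSum_smoothNumbers_prod_primesBelow_geometric hf (n + 1)).2
  rw [harmonic_eq_sum_Icc]
  push_cast
  calc ∑ i ∈ Icc 1 n, (i : ℝ)⁻¹
    _ = ∑ i ∈ Icc 1 n, (n + 1).smoothNumbers.indicator (fun i : ℕ ↦ (i : ℝ)⁻¹) i := by
      refine sum_congr rfl fun i hi ↦ ?_
      rw [mem_Icc] at hi
      rw [Set.indicator_of_mem (Nat.mem_smoothNumbers_of_lt hi.1 (Nat.lt_succ_of_le hi.2))]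
    _ ≤ _ := sum_le_hasSum _ (fun i _ ↦ Set.indicator_nonneg (fun _ _ ↦ by positivity) i) hsum

theorem prod_primesLE_one_sub_inv_le {n : ℕ} (hn : n ≠ 0) :
    ∏ p ∈ primesLE n, (1 - (p : ℝ)⁻¹) ≤ (log (n + 1))⁻¹ := by
  have hlog : 0 < log (n + 1) := log_pos (by simpa using hn.bot_lt)
  have h := (log_add_one_le_harmonic n).trans (harmonic_le_prod_primesLE n)
  rw [Nat.cast_add_one, prod_inv_distrib] at h
  simpa only [inv_inv] using inv_anti₀ hlog h

end Mertens

section TwinPrimes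

theorem prod_primesLE_erase_two_one_sub_two_div_le {z : ℕ} (hz : 2 ≤ z) :
    ∏ p ∈ (primesLE z).erase 2, (1 - 2 / (p : ℝ)) ≤ 4 / log (z + 1) ^ 2 := by
  have hodd : ∏ p ∈ (primesLE z).erase 2, (1 - (p : ℝ)⁻¹) ≤ 2 * (log (z + 1))⁻¹ := by
    have h := prod_primesLE_one_sub_inv_le (by lia : z ≠ 0)
    rw [← mul_prod_erase _ _ (mem_primesLE.mpr ⟨hz, Nat.prime_two⟩), Nat.cast_ofNat] at h
    linarith
  calc ∏ p ∈ (primesLE z).erase 2, (1 - 2 / (p : ℝ))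
    _ ≤ ∏ p ∈ (primesLE z).erase 2, (1 - (p : ℝ)⁻¹) ^ 2 := by
      refine prod_le_prod (fun p hp ↦ ?_) fun p _ ↦ ?_
      · exact sub_nonneg.mpr (div_le_one_of_le₀
          (mod_cast Nat.two_le_of_mem_primesLE (mem_of_mem_erase hp)) (by positivity))
      · rw [div_eq_mul_inv]
        linarith [sq_nonneg (p : ℝ)⁻¹]
    _ ≤ (2 * (log (z + 1))⁻¹) ^ 2 := by
      rw [prod_pow]
      gcongr
      exact prod_nonneg fun p _ ↦ sub_nonneg.mpr (Nat.cast_inv_le_one p)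
    _ = 4 / log (z + 1) ^ 2 := by
      ring

theorem card_filter_prime_and_prime_add_two_le (N z : ℕ) :
    #{p ∈ Icc 1 N | p.Prime ∧ (p + 2).Prime} ≤
      z + #{n ∈ Ioc 0 N | ∀ p ∈ (primesLE z).erase 2,
        ((n : ℕ) : ZMod p) ∉ ({0, -2} : Finset (ZMod p))} := by
  have hsub : {p ∈ Icc 1 N | p.Prime ∧ (p + 2).Prime} ⊆ Icc 1 z ∪
      {n ∈ Ioc 0 N | ∀ p ∈ (primesLE z).erase 2, ((n : ℕ) : ZMod p) ∉ ({0, -2} : Finset _)} := by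
    intro n hn
    obtain ⟨hnN, hn, hn2⟩ := mem_filter.mp hn
    rw [mem_Icc] at hnN
    rcases le_or_gt n z with hnz | hzn
    · exact mem_union_left _ (mem_Icc.mpr ⟨hnN.1, hnz⟩)
    refine mem_union_right _ (mem_filter.mpr ⟨mem_Ioc.mpr hnN, fun p hp hmem ↦ ?_⟩)
    obtain ⟨hpz, hp⟩ := mem_primesLE.mp (mem_of_mem_erase hp)
    rw [mem_insert, mem_singleton, eq_neg_iff_add_eq_zero, ← Nat.cast_ofNat, ← Nat.cast_add,
      ZMod.natCast_eq_zero_iff, ZMod.natCast_eq_zero_iff, Nat.prime_dvd_prime_iff_eq hp hn,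
      Nat.prime_dvd_prime_iff_eq hp hn2] at hmem
    lia
  calc _ ≤ _ := card_le_card hsub
    _ ≤ _ := card_union_le _ _
    _ = _ := by rw [Nat.card_Icc, Nat.add_sub_cancel]

theorem card_zero_neg_two {p : ℕ} (hp : p.Prime) (hp2 : p ≠ 2) :
    #({0, -2} : Finset (ZMod p)) = 2 := by
  refine card_pair fun h ↦ hp2 ?_
  rw [zero_eq_neg, ← Nat.cast_ofNat, ZMod.natCast_eq_zero_iff] at h
  exact (Nat.prime_dvd_prime_iff_eq hp Nat.prime_two).mp h

theorem card_Ioc_filter_forall_natCast_notMem_zero_neg_two_le (N z : ℕ) {c y : ℝ} (hc : 1 ≤ c)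
    (hy : 1 ≤ y) {m : ℕ} (hm : Even m) :
    (#{n ∈ Ioc 0 N | ∀ p ∈ (primesLE z).erase 2,
        ((n : ℕ) : ZMod p) ∉ ({0, -2} : Finset (ZMod p))} : ℝ) ≤
      N * (∏ p ∈ (primesLE z).erase 2, (1 - 2 / p : ℝ) +
        exp (c * ∑ p ∈ (primesLE z).erase 2, (2 / p : ℝ)) / c ^ m) +
        y ^ m * exp (2 * z / y) := by
  set P := (primesLE z).erase 2
  have hP : ∀ p ∈ P, p.Prime := fun p hp ↦ Nat.prime_of_mem_primesLE (mem_of_mem_erase hp)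
  have hcard : ∀ p ∈ P, #({0, -2} : Finset (ZMod p)) = 2 := fun p hp ↦
    card_zero_neg_two (hP p hp) (ne_of_mem_erase hp)
  have hPcard : #P ≤ z := by
    have hsub : P ⊆ Ioc 0 z := fun p hp ↦
      mem_Ioc.mpr ⟨(hP p hp).pos, Nat.le_of_mem_primesLE (mem_of_mem_erase hp)⟩
    simpa using card_le_card hsub
  have hprod : ∏ p ∈ P, (1 - #({0, -2} : Finset (ZMod p)) / p : ℝ) = ∏ p ∈ P, (1 - 2 / p : ℝ) :=
    prod_congr rfl fun p hp ↦ by rw [hcard p hp, Nat.cast_ofNat]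
  have hsum : ∑ p ∈ P, (#({0, -2} : Finset (ZMod p)) / p : ℝ) = ∑ p ∈ P, (2 / p : ℝ) :=
    sum_congr rfl fun p hp ↦ by rw [hcard p hp, Nat.cast_ofNat]
  have hsum' : ∑ p ∈ P, (#({0, -2} : Finset (ZMod p)) : ℝ) ≤ 2 * z := by
    rw [sum_congr rfl fun p hp ↦ by rw [hcard p hp], sum_const, nsmul_eq_mul, mul_comm]
    push_cast
    gcongr
  have hsieve := card_Ioc_filter_forall_natCast_notMem_le N.zero_le (fun p hp ↦ (hP p hp).ne_zero)
    (fun p hp q hq hpq ↦ (Nat.coprime_primes (hP p hp) (hP q hq)).mpr hpq)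
    (fun p ↦ ({0, -2} : Finset (ZMod p))) hc hy hm
  rw [hprod, hsum, Nat.cast_zero, sub_zero] at hsieve
  refine hsieve.trans ?_
  gcongr

theorem twinPrimeCounting_le_of_two_le {x : ℝ} (hx : 0 ≤ x) {z : ℕ} (hz : 2 ≤ z) (k : ℕ) :
    (twinPrimeCounting x : ℝ) ≤
      z + x * (4 / log (z + 1) ^ 2 + exp (2 * exp 1 * (4 * log (log z) + 7) - 2 * k)) +
        z ^ (2 * k) * exp 2 := by
  have hz1 : (1 : ℝ) ≤ z := mod_cast one_le_two.trans hz
  have hsum : ∑ p ∈ (primesLE z).erase 2, (2 / p : ℝ) ≤ 2 * (4 * log (log z) + 7) := by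
    simp only [div_eq_mul_inv, ← mul_sum]
    gcongr
    exact (sum_le_sum_of_subset_of_nonneg (erase_subset _ _) fun _ _ _ ↦ by positivity).trans
      (sum_primesLE_inv_le hz)
  have htail : exp (exp 1 * ∑ p ∈ (primesLE z).erase 2, (2 / p : ℝ)) / exp 1 ^ (2 * k) ≤
      exp (2 * exp 1 * (4 * log (log z) + 7) - 2 * k) := by
    rw [← exp_nat_mul, ← exp_sub, mul_one, Nat.cast_mul, Nat.cast_ofNat, mul_comm 2 (exp 1),
      mul_assoc]
    gcongr
  have hcount : (twinPrimeCounting x : ℝ) ≤ z + (#{n ∈ Ioc 0 ⌊x⌋₊ | ∀ p ∈ (primesLE z).erase 2,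
      ((n : ℕ) : ZMod p) ∉ ({0, -2} : Finset (ZMod p))} : ℝ) := by
    rw [← Nat.cast_add, Nat.cast_le]
    exact card_filter_prime_and_prime_add_two_le ⌊x⌋₊ z
  have hsieve := card_Ioc_filter_forall_natCast_notMem_zero_neg_two_le ⌊x⌋₊ z
    (one_le_exp zero_le_one) hz1 (even_two_mul k)
  rw [mul_div_cancel_right₀ _ (by positivity)] at hsieve
  calc (twinPrimeCounting x : ℝ)
    _ ≤ z + (⌊x⌋₊ * (∏ p ∈ (primesLE z).erase 2, (1 - 2 / p : ℝ) +
        exp (exp 1 * ∑ p ∈ (primesLE z).erase 2, (2 / p : ℝ)) / exp 1 ^ (2 * k)) +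
        z ^ (2 * k) * exp 2) := hcount.trans (by gcongr)
    _ ≤ z + (⌊x⌋₊ * (4 / log (z + 1) ^ 2 +
        exp (2 * exp 1 * (4 * log (log z) + 7) - 2 * k)) + z ^ (2 * k) * exp 2) := by
      gcongr
      exact prod_primesLE_erase_two_one_sub_two_div_le hz
    _ ≤ z + x * (4 / log (z + 1) ^ 2 + exp (2 * exp 1 * (4 * log (log z) + 7) - 2 * k)) +
        z ^ (2 * k) * exp 2 := by
      rw [← add_assoc]
      gcongr
      exact Nat.floor_le hx

theorem twinPrimeCounting_le {x : ℝ} (hx : 0 ≤ x) {t : ℝ} (ht : 1 ≤ t) (k : ℕ) :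
    (twinPrimeCounting x : ℝ) ≤
      exp t + x * (4 / t ^ 2 + exp (2 * exp 1 * (4 * log t + 7) - 2 * k)) +
        exp (2 * k * t + 2) := by
  set z := ⌊exp t⌋₊
  have hzle : (z : ℝ) ≤ exp t := Nat.floor_le (exp_pos t).le
  have hz : 2 ≤ z := Nat.le_floor (by push_cast; linarith [add_one_le_exp t])
  have hlogz : 0 < log z := log_pos (mod_cast hz)
  have hlogz_le : log z ≤ t := (log_le_iff_le_exp (by positivity)).mpr hzle
  have hle_log : t ≤ log (z + 1) :=
    (le_log_iff_exp_le (by positivity)).mpr (Nat.lt_floor_add_one _).le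
  have hpow : (z : ℝ) ^ (2 * k) * exp 2 ≤ exp (2 * k * t + 2) := by
    rw [exp_add]
    gcongr
    calc (z : ℝ) ^ (2 * k) ≤ exp t ^ (2 * k) := by gcongr
      _ = exp (2 * k * t) := by rw [← exp_nat_mul, Nat.cast_mul, Nat.cast_ofNat]
  refine (twinPrimeCounting_le_of_two_le hx hz k).trans ?_
  gcongr

theorem exp_half_le_exp_mul_log_sq_div_sq {L : ℝ} (hL : 0 < L) (hlog : 1 ≤ log L)
    (hexp : L ^ 2 ≤ exp (L / 2)) : exp (L / 2) ≤ exp L * log L ^ 2 / L ^ 2 := by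
  rw [le_div_iff₀ (by positivity)]
  calc exp (L / 2) * L ^ 2
    _ ≤ exp (L / 2) * exp (L / 2) := by gcongr
    _ = exp L := by rw [← exp_add, add_halves]
    _ ≤ exp L * log L ^ 2 := le_mul_of_one_le_right (exp_pos L).le (one_le_pow₀ hlog)

theorem exp_two_mul_exp_one_mul_sub_le {L k : ℝ} (hL : 1 ≤ L) (hk : 12 * log L ≤ k) :
    exp (2 * exp 1 * (4 * log L + 7) - 2 * k) ≤ exp 39 / L ^ 2 := by
  have hlog : 0 ≤ log L := log_nonneg hL
  have he : exp 1 ≤ 2.72 := by linarith [exp_one_lt_d9]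
  have hmul : exp 1 * (4 * log L + 7) ≤ 2.72 * (4 * log L + 7) := by gcongr
  calc exp (2 * exp 1 * (4 * log L + 7) - 2 * k)
    _ ≤ exp (39 - log L * 2) := by
      rw [exp_le_exp]
      linarith
    _ = exp 39 / L ^ 2 := by rw [exp_sub, exp_mul, exp_log (by linarith), rpow_two]

theorem twinPrimeCounting_exp_le_of_two_mul_mul_le {L t : ℝ} {k : ℕ} (ht : 1 ≤ t)
    (htL : t ≤ L / 2) (hk : 12 * log L ≤ k) (hkt : 2 * k * t ≤ L / 2) :
    (twinPrimeCounting (exp L) : ℝ) ≤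
      exp L * (4 / t ^ 2 + exp 39 / L ^ 2) + (1 + exp 2) * exp (L / 2) := by
  have hL : 1 ≤ L := by linarith
  have htail : exp (2 * exp 1 * (4 * log t + 7) - 2 * k) ≤ exp 39 / L ^ 2 := by
    refine le_trans ?_ (exp_two_mul_exp_one_mul_sub_le hL hk)
    gcongr
    linarith
  calc (twinPrimeCounting (exp L) : ℝ)
    _ ≤ exp t + exp L * (4 / t ^ 2 + exp (2 * exp 1 * (4 * log t + 7) - 2 * k)) +
        exp (2 * k * t + 2) := twinPrimeCounting_le (exp_pos L).le ht k
    _ ≤ exp (L / 2) + exp L * (4 / t ^ 2 + exp 39 / L ^ 2) + exp (L / 2) * exp 2 := by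
      rw [exp_add]
      gcongr
    _ = exp L * (4 / t ^ 2 + exp 39 / L ^ 2) + (1 + exp 2) * exp (L / 2) := by ring

theorem twinPrimeCounting_exp_le {L : ℝ} (hlog : 1 ≤ log L) (hL : 52 * log L ≤ L)
    (hexp : L ^ 2 ≤ exp (L / 2)) :
    (twinPrimeCounting (exp L) : ℝ) ≤
      (1 + 4 * 52 ^ 2 + exp 39 + exp 2) * exp L * log L ^ 2 / L ^ 2 := by
  have hL0 : 0 < L := by linarith
  set l := log L
  -- The tail needs `4 * exp 1 * l + l ≤ 12 * l ≤ k`; since `k ≤ 13 * l`, the error condition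
  -- `2 * k * t ≤ L / 2` then holds with `52 = 2 * 2 * 13`.
  set t := L / (52 * l) with ht
  set k := ⌈12 * l⌉₊
  have hkl : (k : ℝ) ≤ 13 * l := by linarith [Nat.ceil_lt_add_one (by linarith : 0 ≤ 12 * l)]
  have ht1 : 1 ≤ t := by rwa [one_le_div₀ (by positivity)]
  have htL : t ≤ L / 2 := by
    rw [ht]
    gcongr
    linarith
  have hkt : 2 * k * t ≤ L / 2 :=
    calc 2 * k * t ≤ 2 * (13 * l) * t := by gcongr
      _ = L / 2 := by
        rw [ht]
        field_simp
        norm_num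
  have hmain : 4 / t ^ 2 = 4 * 52 ^ 2 * l ^ 2 / L ^ 2 := by
    rw [ht]
    field_simp
  calc (twinPrimeCounting (exp L) : ℝ)
    _ ≤ exp L * (4 / t ^ 2 + exp 39 / L ^ 2) + (1 + exp 2) * exp (L / 2) :=
      twinPrimeCounting_exp_le_of_two_mul_mul_le ht1 htL (Nat.le_ceil _) hkt
    _ ≤ exp L * (4 * 52 ^ 2 * l ^ 2 / L ^ 2 + exp 39 * l ^ 2 / L ^ 2) +
        (1 + exp 2) * (exp L * l ^ 2 / L ^ 2) := by
      rw [hmain]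
      gcongr
      · exact le_mul_of_one_le_right (exp_pos 39).le (one_le_pow₀ hlog)
      · exact exp_half_le_exp_mul_log_sq_div_sq hL0 hlog hexp
    _ = (1 + 4 * 52 ^ 2 + exp 39 + exp 2) * exp L * l ^ 2 / L ^ 2 := by ring

end TwinPrimes

theorem eventually_mul_log_le (c : ℝ) : ∀ᶠ L in atTop, c * log L ≤ L := by
  filter_upwards [(isLittleO_log_id_atTop.const_mul_left c).bound one_pos, eventually_ge_atTop 0]
    with L hbound hL
  rw [one_mul, id, norm_of_nonneg hL] at hbound
  exact (le_abs_self _).trans hbound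

theorem eventually_pow_le_exp_mul (n : ℕ) {b : ℝ} (hb : 0 < b) :
    ∀ᶠ L in atTop, L ^ n ≤ exp (b * L) := by
  filter_upwards [(isLittleO_pow_exp_pos_mul_atTop n hb).bound one_pos] with L hbound
  rw [one_mul, norm_of_nonneg (exp_pos _).le] at hbound
  exact (le_abs_self _).trans hbound

/-- The number of twin primes up to `x` is `O(x (log log x)² / (log x)²)`. -/
theorem twinPrimeCounting_bigO :
    ∃ C : ℝ, 0 < C ∧ ∃ x₀ : ℝ, 3 ≤ x₀ ∧ ∀ x : ℝ, x₀ ≤ x →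
      (twinPrimeCounting x : ℝ) ≤
        C * x * (Real.log (Real.log x)) ^ 2 / (Real.log x) ^ 2 := by
  have hlarge : ∀ᶠ L in atTop, 1 ≤ log L ∧ 52 * log L ≤ L ∧ L ^ 2 ≤ exp (L / 2) := by
    filter_upwards [tendsto_log_atTop.eventually_ge_atTop 1, eventually_mul_log_le 52,
      eventually_pow_le_exp_mul 2 one_half_pos] with L hlog hL hexp
    exact ⟨hlog, hL, by rwa [div_eq_inv_mul, ← one_div]⟩
  obtain ⟨x₁, hx₁⟩ := eventually_atTop.mp (tendsto_log_atTop.eventually hlarge)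
  refine ⟨1 + 4 * 52 ^ 2 + exp 39 + exp 2, by positivity, max x₁ 3, le_max_right _ _,
    fun x hx ↦ ?_⟩
  obtain ⟨hlog, hL, hexp⟩ := hx₁ x (le_of_max_le_left hx)
  have hx0 : 0 < x := by linarith [le_of_max_le_right hx]
  simpa only [exp_log hx0] using twinPrimeCounting_exp_le hlog hL hexp
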